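/- arXiv:2208.13540 — 5 statements merged into one kernel-verified Lean document; each statement's English description precedes it below -/
import Mathlib

section
/- For every affine map f : ℝⁿ → ℝ, the squared L² norm over an n-simplex has the exact representation ∫_T f(x)² dx = (|T| / ((n+1)(n+2))) · ( Σᵢ₌₀ⁿ f(vᵢ)² + (Σᵢ₌₀ⁿ f(vᵢ))² ). -/
open MeasureTheory

/-!
In barycentric coordinates `f = ∑ f(vᵢ) λᵢ`, so `∫_T f²` is a quadratic form in the values `f(vᵢ)`
whose coefficients are the moments `∫_T λᵢ λⱼ = |T| (1 + δᵢⱼ) / ((n + 1) (n + 2))`. These are cases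
of Dirichlet's formula `∫_T ∏ λᵢ ^ kᵢ = |T| n! ∏ kᵢ! / (n + ∑ kᵢ)!`. The coordinates `λ₁, …, λₙ` map
`T` onto the corner simplex and a Haar measure to a multiple of Lebesgue measure, and the case
`k = 0` of the formula determines that multiple, so no Jacobian has to be computed. Slicing the
corner simplex along one coordinate leaves corner simplices of one dimension less, and the outer
integral is a beta integral.
-/

open Set
open scoped Nat

section CornerSimplex

/-- The corner simplex of size `t` in `ℝⁿ`. For `t = 1` its points are the possible values of all
but one of the barycentric coordinates on an `n`-simplex; the other sizes occur as its slices. -/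
def cornerSimplex (n : ℕ) (t : ℝ) : Set (Fin n → ℝ) := {x | (∀ i, 0 ≤ x i) ∧ ∑ i, x i ≤ t}

variable {n : ℕ} {t : ℝ}

lemma isClosed_cornerSimplex : IsClosed (cornerSimplex n t) := by
  simp only [cornerSimplex, ofPred_and, ofPred_forall]
  exact (isClosed_iInter fun i => isClosed_le continuous_const (continuous_apply i)).inter
    (isClosed_le (by fun_prop) continuous_const)

lemma isCompact_cornerSimplex : IsCompact (cornerSimplex n t) := by
  refine (isCompact_Icc (a := 0) (b := fun _ => t)).of_isClosed_subset isClosed_cornerSimplex ?_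
  rintro x ⟨hx, hsum⟩
  exact ⟨hx, fun i => (Finset.single_le_sum (fun j _ => hx j) (Finset.mem_univ i)).trans hsum⟩

lemma cons_mem_cornerSimplex_iff {y : ℝ} {x : Fin n → ℝ} :
    (Fin.cons y x : Fin (n + 1) → ℝ) ∈ cornerSimplex (n + 1) t ↔
      y ∈ Icc 0 t ∧ x ∈ cornerSimplex n (t - y) := by
  simp only [cornerSimplex, mem_ofPred_eq, Fin.forall_fin_succ, Fin.sum_univ_succ, Fin.cons_zero,
    Fin.cons_succ, mem_Icc, le_sub_iff_add_le']
  refine ⟨fun ⟨⟨hy, hx⟩, hsum⟩ => ⟨⟨hy, ?_⟩, hx, hsum⟩, fun ⟨⟨hy, _⟩, hx, hsum⟩ => ⟨⟨hy, hx⟩, hsum⟩⟩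
  linarith [Finset.sum_nonneg fun i (_ : i ∈ Finset.univ) => hx i]

lemma integral_fin_succ_eq_integral_integral_cons {G : Type*} [NormedAddCommGroup G]
    [NormedSpace ℝ G] {g : (Fin (n + 1) → ℝ) → G} (hg : Integrable g) :
    ∫ x, g x = ∫ y : ℝ, ∫ x : Fin n → ℝ, g (Fin.cons y x) := by
  have hcons := (volume_preserving_piFinSuccAbove (fun _ : Fin (n + 1) => ℝ) 0).symm
  have hprod := (hcons.integrable_comp_emb (MeasurableEquiv.measurableEmbedding _)).2 hg
  rw [← hcons.integral_comp', Measure.volume_eq_prod]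
  refine (integral_prod _ hprod).trans ?_
  simp only [Function.comp_apply, MeasurableEquiv.piFinSuccAbove_symm_apply,
    Fin.insertNthEquiv_zero]
  rfl

lemma setIntegral_cornerSimplex_succ {G : Type*} [NormedAddCommGroup G] [NormedSpace ℝ G]
    {g : (Fin (n + 1) → ℝ) → G} (hg : IntegrableOn g (cornerSimplex (n + 1) t)) :
    ∫ x in cornerSimplex (n + 1) t, g x =
      ∫ y in Icc 0 t, ∫ x in cornerSimplex n (t - y), g (Fin.cons y x) := by
  have hmeas {m : ℕ} {s : ℝ} : MeasurableSet (cornerSimplex m s) :=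
    isClosed_cornerSimplex.measurableSet
  have hslice (y : ℝ) (x : Fin n → ℝ) : (cornerSimplex (n + 1) t).indicator g (Fin.cons y x) =
      (Icc 0 t).indicator
        (fun y => (cornerSimplex n (t - y)).indicator (fun x => g (Fin.cons y x)) x) y := by
    classical simp only [indicator_apply, cons_mem_cornerSimplex_iff, ite_and]
  rw [← integral_indicator hmeas,
    integral_fin_succ_eq_integral_integral_cons ((integrable_indicator_iff hmeas).2 hg),
    ← integral_indicator measurableSet_Icc]
  refine integral_congr_ae (.of_forall fun y => ?_)
  by_cases hy : y ∈ Icc 0 t <;> simp [hslice, hy, integral_indicator hmeas]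

lemma integral_pow_mul_sub_pow (ht : 0 ≤ t) (j m : ℕ) :
    ∫ y in (0 : ℝ)..t, y ^ j * (t - y) ^ m = t ^ (j + m + 1) * (j ! * m ! / (j + m + 1)!) := by
  rcases ht.eq_or_lt with rfl | ht
  · simp
  have hbeta := Complex.betaIntegral_scaled (j + 1) (m + 1) ht
  rw [Complex.betaIntegral_eq_Gamma_mul_div _ _ (by norm_cast; omega) (by norm_cast; omega),
    show (j + 1 + (m + 1) : ℂ) = ((j + m + 1 : ℕ) : ℂ) + 1 by push_cast; ring] at hbeta
  simp only [add_sub_cancel_right, Complex.Gamma_nat_eq_factorial, Complex.cpow_natCast] at hbeta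
  rw [← Complex.ofReal_inj, ← intervalIntegral.integral_ofReal]
  push_cast
  exact hbeta

theorem setIntegral_cornerSimplex_prod_pow (ht : 0 ≤ t) (k : Fin n → ℕ) (m : ℕ) :
    ∫ x in cornerSimplex n t, (∏ i, x i ^ k i) * (t - ∑ i, x i) ^ m =
      t ^ (n + (∑ i, k i + m)) * ((∏ i, (k i)! : ℕ) * m ! / (n + (∑ i, k i + m))!) := by
  induction n generalizing t with
  | zero =>
    have huniv : cornerSimplex 0 t = univ := by simp [cornerSimplex, ht]
    have hm : (m ! : ℝ) ≠ 0 := by positivity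
    simp [huniv, measureReal_def, volume_pi, hm]
  | succ n ih =>
    have hint : IntegrableOn (fun x => (∏ i, x i ^ k i) * (t - ∑ i, x i) ^ m)
        (cornerSimplex (n + 1) t) :=
      ContinuousOn.integrableOn_compact isCompact_cornerSimplex (by fun_prop)
    set K := ∑ i : Fin n, k i.succ + m
    set P := ((∏ i : Fin n, (k i.succ)! : ℕ) * m ! / (n + K)! : ℝ) with hP
    have hslice : ∀ y ∈ Icc 0 t,
        ∫ x in cornerSimplex n (t - y), (∏ i, (Fin.cons y x : Fin (n + 1) → ℝ) i ^ k i) *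
            (t - ∑ i, (Fin.cons y x : Fin (n + 1) → ℝ) i) ^ m =
          y ^ k 0 * (t - y) ^ (n + K) * P := fun y hy => by
      simp only [Fin.prod_univ_succ, Fin.sum_univ_succ, Fin.cons_zero, Fin.cons_succ, mul_assoc,
        ← sub_sub, integral_const_mul]
      rw [ih (sub_nonneg.2 hy.2)]
    have hexp : n + 1 + (k 0 + ∑ i : Fin n, k i.succ + m) = k 0 + (n + K) + 1 := by omega
    rw [setIntegral_cornerSimplex_succ hint, setIntegral_congr_fun measurableSet_Icc hslice,
      integral_Icc_eq_integral_Ioc, ← intervalIntegral.integral_of_le ht,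
      intervalIntegral.integral_mul_const, integral_pow_mul_sub_pow ht, hP, Fin.prod_univ_succ,
      Fin.sum_univ_succ, hexp]
    push_cast
    field_simp

lemma volume_real_cornerSimplex_one : volume.real (cornerSimplex n 1) = 1 / n ! := by
  simpa using setIntegral_cornerSimplex_prod_pow (n := n) zero_le_one 0 0

end CornerSimplex

section AffineMap

variable {k V P W ι : Type*} [Ring k] [AddCommGroup V] [Module k V] [AddTorsor V P]
  [AddCommGroup W] [Module k W] [Fintype ι]

lemma apply_eq_sum_coord_smul (b : AffineBasis ι k P) (f : P →ᵃ[k] W) (x : P) :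
    f x = ∑ i, b.coord i x • f (b i) := by
  have hsum := b.sum_coord_apply_eq_one x
  conv_lhs => rw [← b.affineCombination_coord_eq_self x, Finset.map_affineCombination _ _ _ hsum,
    Finset.affineCombination_eq_linear_combination _ _ _ hsum]
  rfl

end AffineMap

section TailCoords

variable {n : ℕ} {E : Type*} [AddCommGroup E] [Module ℝ E] (b : AffineBasis (Fin (n + 1)) ℝ E)

lemma one_sub_sum_coord_succ (x : E) : 1 - ∑ i : Fin n, b.coord i.succ x = b.coord 0 x := by
  rw [← b.sum_coord_apply_eq_one x, Fin.sum_univ_succ, add_sub_cancel_right]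

lemma bijective_pi_coord_succ :
    Function.Bijective (AffineMap.pi fun i : Fin n => b.coord i.succ) := by
  refine ⟨fun x y hxy => b.ext_elem ?_, fun y => ?_⟩
  · have hsucc (i : Fin n) : b.coord i.succ x = b.coord i.succ y := congr_fun hxy i
    exact Fin.cases (by simp only [← one_sub_sum_coord_succ, hsucc]) hsucc
  · have hw : ∑ i, (Fin.cons (1 - ∑ i, y i) y : Fin (n + 1) → ℝ) i = 1 := by
      simp [Fin.sum_univ_succ]
    refine ⟨Finset.univ.affineCombination ℝ b (Fin.cons (1 - ∑ i, y i) y), funext fun i => ?_⟩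
    simpa using b.coord_apply_combination_of_mem (Finset.mem_univ i.succ) hw

/-- The barycentric coordinates with nonzero index, as an affine isomorphism onto `ℝⁿ`; the
remaining coordinate is determined by the fact that all of them sum to `1`. -/
noncomputable def tailCoords : E ≃ᵃ[ℝ] (Fin n → ℝ) :=
  AffineEquiv.ofBijective (bijective_pi_coord_succ b)

lemma tailCoords_apply (x : E) (i : Fin n) : tailCoords b x i = b.coord i.succ x := rfl

lemma tailCoords_preimage_cornerSimplex :
    tailCoords b ⁻¹' cornerSimplex n 1 = convexHull ℝ (range b) := by
  ext x
  simp only [b.convexHull_eq_nonneg_coord, cornerSimplex, mem_preimage, mem_ofPred_eq,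
    Fin.forall_fin_succ, ← one_sub_sum_coord_succ, sub_nonneg, tailCoords_apply, and_comm]

end TailCoords

section Integral

lemma isAddHaarMeasure_map_affineEquiv {E F : Type*} [NormedAddCommGroup E] [NormedSpace ℝ E]
    [FiniteDimensional ℝ E] [MeasurableSpace E] [BorelSpace E] [NormedAddCommGroup F]
    [NormedSpace ℝ F] [MeasurableSpace F] [BorelSpace F] (μ : Measure E)
    [μ.IsAddHaarMeasure] (e : E ≃ᵃ[ℝ] F) : (μ.map e).IsAddHaarMeasure := by
  let L : E ≃L[ℝ] F := e.linear.toContinuousLinearEquiv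
  have he : (e : E → F) = (· + e 0) ∘ L := funext fun x => by
    simpa [L] using e.map_vadd 0 x
  rw [he, ← Measure.map_map (measurable_add_const _) L.continuous.measurable,
    map_add_right_eq_self]
  infer_instance

variable {n : ℕ} {E : Type*} [NormedAddCommGroup E] [NormedSpace ℝ E] [MeasurableSpace E]
  [BorelSpace E] (b : AffineBasis (Fin (n + 1)) ℝ E) (μ : Measure E) [μ.IsAddHaarMeasure]

theorem setIntegral_convexHull_comp_tailCoords {G : Type*} [NormedAddCommGroup G]
    [NormedSpace ℝ G] (g : (Fin n → ℝ) → G) :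
    ∫ x in convexHull ℝ (range b), g (tailCoords b x) ∂μ =
      (n ! * μ.real (convexHull ℝ (range b))) • ∫ y in cornerSimplex n 1, g y := by
  have := b.finiteDimensional
  have := isAddHaarMeasure_map_affineEquiv μ (tailCoords b)
  have hemb : MeasurableEmbedding (tailCoords b) :=
    (AffineEquiv.toContinuousAffineEquiv (tailCoords b)).toHomeomorph.measurableEmbedding
  obtain ⟨c, hc⟩ : ∃ c : NNReal, μ.map (tailCoords b) = c • volume :=
    ⟨_, Measure.isAddLeftInvariant_eq_smul _ _⟩
  have hvol : μ.real (convexHull ℝ (range b)) = c * (1 / n !) := by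
    rw [← tailCoords_preimage_cornerSimplex, ← map_measureReal_apply hemb.measurable
      isClosed_cornerSimplex.measurableSet, hc, measureReal_nnreal_smul_apply,
      volume_real_cornerSimplex_one]
  rw [← tailCoords_preimage_cornerSimplex b, ← hemb.setIntegral_map, hc, Measure.restrict_smul,
    integral_smul_nnreal_measure, tailCoords_preimage_cornerSimplex, hvol, NNReal.smul_def]
  congr 1
  field_simp

theorem setIntegral_convexHull_prod_coord_pow (k : Fin (n + 1) → ℕ) :
    ∫ x in convexHull ℝ (range b), ∏ i, b.coord i x ^ k i ∂μ =
      μ.real (convexHull ℝ (range b)) * (n ! * (∏ i, (k i)! : ℕ) / (n + ∑ i, k i)!) := by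
  have hcoord (x : E) : ∏ i, b.coord i x ^ k i =
      (∏ i, tailCoords b x i ^ k i.succ) * (1 - ∑ i, tailCoords b x i) ^ k 0 := by
    simp only [tailCoords_apply, one_sub_sum_coord_succ, Fin.prod_univ_succ, mul_comm]
  simp only [hcoord]
  rw [setIntegral_convexHull_comp_tailCoords b μ
      fun y => (∏ i, y i ^ k i.succ) * (1 - ∑ i, y i) ^ k 0,
    setIntegral_cornerSimplex_prod_pow zero_le_one, Fin.prod_univ_succ, Fin.sum_univ_succ,
    add_comm (k 0), smul_eq_mul, one_pow]
  push_cast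
  ring

theorem setIntegral_convexHull_coord_mul_coord (i j : Fin (n + 1)) :
    ∫ x in convexHull ℝ (range b), b.coord i x * b.coord j x ∂μ =
      μ.real (convexHull ℝ (range b)) / ((n + 1) * (n + 2)) * (1 + if i = j then 1 else 0) := by
  have hfactorial_add_two : ((n + 2)! : ℝ) = (n + 2) * (n + 1) * n ! := by
    push_cast [Nat.factorial_succ]
    ring
  have hfactorial_single (l : Fin (n + 1)) : ((if l = i then 1 else 0) + if l = j then 1 else 0)! =
      if l = i then 1 + if i = j then 1 else 0 else 1 := by
    split_ifs <;> simp_all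
  have hmoment := setIntegral_convexHull_prod_coord_pow b μ (Pi.single i 1 + Pi.single j 1)
  simp only [Pi.add_apply, pow_add, Finset.prod_mul_distrib, Finset.sum_add_distrib,
    Pi.single_apply, Finset.sum_ite_eq', Finset.mem_univ, if_true, pow_ite, pow_one, pow_zero,
    Finset.prod_ite_eq', Nat.reduceAdd, hfactorial_single, hfactorial_add_two] at hmoment
  rw [hmoment]
  push_cast
  field_simp

theorem affine_sq_integral_simplex_general (f : E →ᵃ[ℝ] ℝ) :
    ∫ x in convexHull ℝ (range b), f x ^ 2 ∂μ =
      μ.real (convexHull ℝ (range b)) / ((n + 1) * (n + 2)) *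
        (∑ i, f (b i) ^ 2 + (∑ i, f (b i)) ^ 2) := by
  have := b.finiteDimensional
  have hint (i j : Fin (n + 1)) : IntegrableOn
      (fun x => b.coord i x * b.coord j x * (f (b i) * f (b j))) (convexHull ℝ (range b)) μ := by
    have hcont (i : Fin (n + 1)) : Continuous (b.coord i) :=
      AffineMap.continuous_of_finiteDimensional _
    exact ContinuousOn.integrableOn_compact ((finite_range b).isCompact_convexHull ℝ) (by fun_prop)
  have hsq (x : E) :
      f x ^ 2 = ∑ i, ∑ j, b.coord i x * b.coord j x * (f (b i) * f (b j)) := by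
    simp only [apply_eq_sum_coord_smul b f x, smul_eq_mul, sq, Finset.sum_mul_sum, mul_mul_mul_comm]
  calc ∫ x in convexHull ℝ (range b), f x ^ 2 ∂μ
      = ∑ i, ∑ j, (∫ x in convexHull ℝ (range b), b.coord i x * b.coord j x ∂μ) *
          (f (b i) * f (b j)) := by
        simp only [hsq]
        rw [integral_finsetSum _ fun i _ => integrable_finsetSum _ fun j _ => hint i j]
        simp only [integral_finsetSum _ fun j _ => hint _ j, integral_mul_const]
    _ = μ.real (convexHull ℝ (range b)) / ((n + 1) * (n + 2)) *
          ∑ i, ∑ j, (1 + if i = j then 1 else 0) * (f (b i) * f (b j)) := by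
        simp only [setIntegral_convexHull_coord_mul_coord, Finset.mul_sum, mul_assoc]
    _ = _ := by
        simp only [add_mul, one_mul, ite_mul, zero_mul, Finset.sum_add_distrib, Finset.sum_ite_eq,
          Finset.mem_univ, if_true, ← Finset.sum_mul_sum, ← sq, add_comm]

end Integral

/-- For every affine map `f : ℝⁿ → ℝ`, the squared `L²` norm over an `n`-simplex
`T = conv{v₀, …, vₙ}` has the exact representation
`∫_T f(x)² dx = (|T| / ((n+1)(n+2))) · (Σᵢ f(vᵢ)² + (Σᵢ f(vᵢ))²)`. -/
theorem affine_sq_integral_simplex (n : ℕ) (hn : 1 ≤ n)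
    (v : Fin (n + 1) → (Fin n → ℝ)) (hv : AffineIndependent ℝ v)
    (f : (Fin n → ℝ) →ᵃ[ℝ] ℝ) :
    (∫ x in convexHull ℝ (Set.range v), (f x) ^ 2)
      = ((volume (convexHull ℝ (Set.range v))).toReal / (((n : ℝ) + 1) * ((n : ℝ) + 2)))
          * ((∑ i, (f (v i)) ^ 2) + (∑ i, f (v i)) ^ 2) := by
  have hspan : affineSpan ℝ (range v) = ⊤ :=
    hv.affineSpan_eq_top_iff_card_eq_finrank_add_one.2 (by simp)
  exact affine_sq_integral_simplex_general ⟨v, hv, hspan⟩ volume f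
end

section
/- The vertex quadrature norm on a simplex is equivalent to the L² norm on affine functions, with explicit constants: for every affine map f : ℝⁿ → ℝ, ∫_T f(x)² dx ≤ (|T| / (n+1)) · Σᵢ₌₀ⁿ f(vᵢ)² ≤ (n+2) · ∫_T f(x)² dx. -/
open MeasureTheory

/-!
The barycentric coordinates `λᵢ` of a simplex `T` with `N` vertices satisfy
`∫_T λᵢ λⱼ = (1 + δᵢⱼ) |T| / (N (N + 1))`. To see this, bisect `T` through the midpoint of the edge
`vᵢ vⱼ`. Each half is the image of `T` under an affine map of determinant `1/2`, and comparing
`∫_T λᵢ²` with the integrals over the two halves gives `3 ∫ λᵢ² = ∫ λⱼ² + 4 ∫ λᵢ λⱼ`. Exchanging `i`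
and `j` yields `∫ λᵢ² = ∫ λⱼ² = 2 ∫ λᵢ λⱼ`, and integrating `(∑ λᵢ)² = 1` fixes the constant.

For an affine `f = ∑ f(vᵢ) λᵢ` this gives
`N (N + 1) ∫_T ‖f‖² = |T| (∑ ‖f(vᵢ)‖² + ‖∑ f(vᵢ)‖²)`, and both inequalities follow from
`0 ≤ ‖∑ f(vᵢ)‖² ≤ N ∑ ‖f(vᵢ)‖²`.
-/

open Module Set
open scoped RealInnerProductSpace

section FiniteSums

variable {ι : Type*} [Fintype ι]

theorem norm_sum_sq_le_card_mul_sum_norm_sq {G : Type*} [SeminormedAddCommGroup G]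
    (c : ι → G) :
    ‖∑ i, c i‖ ^ 2 ≤ Fintype.card ι * ∑ i, ‖c i‖ ^ 2 :=
  (pow_le_pow_left₀ (norm_nonneg _) (norm_sum_le _ _) 2).trans sq_sum_le_card_mul_sum_sq

theorem integral_sum_sum {κ X G : Type*} [Fintype κ] [MeasurableSpace X] {μ : Measure X}
    [NormedAddCommGroup G] [NormedSpace ℝ G] {h : ι → κ → X → G}
    (hint : ∀ i j, Integrable (h i j) μ) :
    ∫ x, ∑ i, ∑ j, h i j x ∂μ = ∑ i, ∑ j, ∫ x, h i j x ∂μ := by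
  rw [integral_finsetSum _ fun i _ => integrable_finsetSum _ fun j _ => hint i j]
  exact Finset.sum_congr rfl fun i _ => integral_finsetSum _ fun j _ => hint i j

end FiniteSums

section AffineMap

variable {k E F ι : Type*} [Ring k] [AddCommGroup E] [Module k E] [AddCommGroup F] [Module k F]

theorem affineMap_add_smul_sub (f : E →ᵃ[k] F) (x y z : E) (c : k) :
    f (x + c • (y - z)) = f x + c • (f y - f z) := by
  have hlin : f.linear (y - z) = f y - f z := by simpa using f.linearMap_vsub y z
  rw [add_comm x, ← vadd_eq_add, f.map_vadd, map_smul, hlin, vadd_eq_add, add_comm]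

theorem affineMap_eq_sum_coord_smul [Fintype ι] (b : AffineBasis ι k E) (f : E →ᵃ[k] F) (x : E) :
    f x = ∑ i, b.coord i x • f (b i) := by
  have hsum := b.sum_coord_apply_eq_one x
  conv_lhs => rw [← b.affineCombination_coord_eq_self x]
  rw [Finset.map_affineCombination _ _ _ hsum,
    Finset.affineCombination_eq_linear_combination _ _ _ hsum]
  rfl

end AffineMap

section Bisection

variable {k E ι : Type*} [Field k] [AddCommGroup E] [Module k E]

/-- The affine map which fixes every vertex of the simplex `b` but `b j`, and sends `b j` to the
midpoint of `b i` and `b j`. It maps the simplex onto the half at `b i` of its bisection through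
that midpoint. Its linear part is written as a transvection, whose determinant is known. -/
noncomputable def bisectionMap (b : AffineBasis ι k E) (i j : ι) : E →ᵃ[k] E where
  toFun x := x + (b.coord j x / 2) • (b i - b j)
  linear := LinearMap.transvection (b.coord j).linear ((1 / 2 : k) • (b i - b j))
  map_vadd' x y := by
    have hcoord : b.coord j (y + x) = (b.coord j).linear y + b.coord j x :=
      (b.coord j).map_vadd x y
    simp only [vadd_eq_add, LinearMap.transvection.apply, hcoord]
    module

theorem bisectionMap_apply (b : AffineBasis ι k E) (i j : ι) (x : E) :
    bisectionMap b i j x = x + (b.coord j x / 2) • (b i - b j) :=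
  rfl

theorem coord_bisectionMap_left (b : AffineBasis ι k E) {i j : ι} (hij : i ≠ j) (x : E) :
    b.coord i (bisectionMap b i j x) = b.coord i x + b.coord j x / 2 := by
  simp [bisectionMap_apply, affineMap_add_smul_sub, b.coord_apply_ne hij]

theorem coord_bisectionMap_right [NeZero (2 : k)] (b : AffineBasis ι k E) {i j : ι} (hij : i ≠ j)
    (x : E) : b.coord j (bisectionMap b i j x) = b.coord j x / 2 := by
  rw [bisectionMap_apply, affineMap_add_smul_sub, b.coord_apply_ne hij.symm, b.coord_apply_eq,
    smul_eq_mul]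
  field_simp
  ring

theorem coord_bisectionMap_of_ne (b : AffineBasis ι k E) {i j l : ι} (hi : l ≠ i) (hj : l ≠ j)
    (x : E) : b.coord l (bisectionMap b i j x) = b.coord l x := by
  simp [bisectionMap_apply, affineMap_add_smul_sub, b.coord_apply_ne hi, b.coord_apply_ne hj]

theorem det_linear_bisectionMap [NeZero (2 : k)] [FiniteDimensional k E] (b : AffineBasis ι k E)
    {i j : ι} (hij : i ≠ j) :
    LinearMap.det (bisectionMap b i j).linear = 1 / 2 := by
  have hlin : (b.coord j).linear (b i - b j) = -1 := by
    simpa [b.coord_apply_ne hij.symm] using (b.coord j).linearMap_vsub (b i) (b j)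
  simp only [bisectionMap, LinearMap.transvection.det, map_smul, hlin, smul_eq_mul]
  field_simp
  ring

theorem bisectionMap_injective [NeZero (2 : k)] (b : AffineBasis ι k E) {i j : ι} (hij : i ≠ j) :
    Function.Injective (bisectionMap b i j) := by
  intro x y hxy
  have hcoord : b.coord j x = b.coord j y := by
    have := congrArg (b.coord j) hxy
    rw [coord_bisectionMap_right b hij, coord_bisectionMap_right b hij] at this
    exact (div_left_inj' two_ne_zero).1 this
  rw [bisectionMap_apply, bisectionMap_apply, hcoord] at hxy
  exact add_right_cancel hxy

theorem bisectionMap_image_convexHull [LinearOrder k] [IsStrictOrderedRing k]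
    (b : AffineBasis ι k E) {i j : ι} (hij : i ≠ j) :
    bisectionMap b i j '' convexHull k (range b) =
      convexHull k (range b) ∩ {x | b.coord j x ≤ b.coord i x} := by
  rw [b.convexHull_eq_nonneg_coord]
  apply Subset.antisymm
  · rintro _ ⟨x, hx : ∀ l, 0 ≤ b.coord l x, rfl⟩
    constructor
    · intro l
      rcases eq_or_ne l i with rfl | hi
      · rw [coord_bisectionMap_left b hij]
        linarith [hx l, hx j]
      rcases eq_or_ne l j with rfl | hj
      · rw [coord_bisectionMap_right b hij]
        linarith [hx l]
      · rw [coord_bisectionMap_of_ne b hi hj]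
        exact hx l
    · rw [mem_ofPred_eq, coord_bisectionMap_left b hij, coord_bisectionMap_right b hij]
      linarith [hx i]
  · rintro y ⟨hy : ∀ l, 0 ≤ b.coord l y, hyij : b.coord j y ≤ b.coord i y⟩
    refine ⟨y + (-b.coord j y) • (b i - b j), fun l => ?_, ?_⟩
    · rw [affineMap_add_smul_sub, smul_eq_mul]
      rcases eq_or_ne l i with rfl | hi
      · rw [b.coord_apply_eq, b.coord_apply_ne hij]
        linarith
      rcases eq_or_ne l j with rfl | hj
      · rw [b.coord_apply_eq, b.coord_apply_ne hij.symm]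
        linarith [hy l]
      · rw [b.coord_apply_ne hi, b.coord_apply_ne hj]
        linarith [hy l]
    · rw [bisectionMap_apply, affineMap_add_smul_sub, b.coord_apply_eq, b.coord_apply_ne hij.symm]
      module

end Bisection

section Measure

variable {E : Type*} [NormedAddCommGroup E] [NormedSpace ℝ E] [FiniteDimensional ℝ E]
  [MeasurableSpace E] [BorelSpace E] (μ : Measure E) [μ.IsAddHaarMeasure]

theorem addHaar_setOf_affineMap_eq {F : Type*} [AddCommGroup F] [Module ℝ F] {f g : E →ᵃ[ℝ] F}
    (hfg : f ≠ g) : μ {x | f x = g x} = 0 := by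
  let S : AffineSubspace ℝ E := (AffineSubspace.mk' (0 : F) ⊥).comap (f - g)
  have mem_S (x : E) : x ∈ S ↔ f x = g x := by simp [S, AffineSubspace.mem_mk', sub_eq_zero]
  have hS : S ≠ ⊤ := fun h => hfg <| AffineMap.ext fun x => (mem_S x).1 (h ▸ trivial)
  have hnull := Measure.addHaar_affineSubspace μ S hS
  rwa [show (S : Set E) = {x | f x = g x} from Set.ext mem_S] at hnull

theorem setIntegral_image_affineMap {G : Type*} [NormedAddCommGroup G] [NormedSpace ℝ G]
    {φ : E →ᵃ[ℝ] E} (hφ : Function.Injective φ) {s : Set E} (hs : MeasurableSet s) (g : E → G) :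
    ∫ x in φ '' s, g x ∂μ = |LinearMap.det φ.linear| • ∫ x in s, g (φ x) ∂μ := by
  let ψ : E →ᴬ[ℝ] E := ⟨φ, φ.continuous_of_finiteDimensional⟩
  have hderiv : ∀ x ∈ s, HasFDerivWithinAt φ ψ.contLinear s x := fun x _ =>
    ψ.hasFDerivAt.hasFDerivWithinAt
  rw [integral_image_eq_integral_abs_det_fderiv_smul μ hs hderiv hφ.injOn, integral_smul]
  rfl

variable {ι : Type*}

theorem setIntegral_convexHull_bisection [Finite ι] {G : Type*} [NormedAddCommGroup G]
    [NormedSpace ℝ G] (b : AffineBasis ι ℝ E) {i j : ι} (hij : i ≠ j) {g : E → G}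
    (hg : IntegrableOn g (convexHull ℝ (range b)) μ) :
    ∫ x in convexHull ℝ (range b), g x ∂μ =
      (1 / 2 : ℝ) • ∫ x in convexHull ℝ (range b), g (bisectionMap b i j x) ∂μ +
        (1 / 2 : ℝ) • ∫ x in convexHull ℝ (range b), g (bisectionMap b j i x) ∂μ := by
  set T := convexHull ℝ (range b)
  have hT : MeasurableSet T := ((finite_range b).isCompact_convexHull ℝ).measurableSet
  have integral_half {i j : ι} (hij : i ≠ j) :
      ∫ x in T ∩ {x | b.coord j x ≤ b.coord i x}, g x ∂μ =
        (1 / 2 : ℝ) • ∫ x in T, g (bisectionMap b i j x) ∂μ := by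
    rw [← bisectionMap_image_convexHull b hij,
      setIntegral_image_affineMap μ (bisectionMap_injective b hij) hT,
      det_linear_bisectionMap b hij, abs_of_pos one_half_pos]
  have hunion : T = T ∩ {x | b.coord j x ≤ b.coord i x} ∪ T ∩ {x | b.coord i x ≤ b.coord j x} := by
    rw [← inter_union_distrib_left, eq_comm, inter_eq_left]
    exact fun x _ => le_total (b.coord j x) (b.coord i x)
  have hcoord : b.coord i ≠ b.coord j := fun h => by
    simpa [b.coord_apply_ne hij.symm] using DFunLike.congr_fun h (b i)
  have hdisj : AEDisjoint μ (T ∩ {x | b.coord j x ≤ b.coord i x})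
      (T ∩ {x | b.coord i x ≤ b.coord j x}) :=
    measure_mono_null (fun _ hx => le_antisymm hx.2.2 hx.1.2)
      (addHaar_setOf_affineMap_eq μ hcoord)
  have hmeas : MeasurableSet (T ∩ {x | b.coord i x ≤ b.coord j x}) :=
    hT.inter (measurableSet_le (continuous_barycentric_coord b i).measurable
      (continuous_barycentric_coord b j).measurable)
  rw [← integral_half hij, ← integral_half hij.symm, ← setIntegral_union₀ hdisj
    hmeas.nullMeasurableSet (hg.mono_set inter_subset_left) (hg.mono_set inter_subset_left),
    ← hunion]

theorem integrableOn_coord_mul_coord [Finite ι] (b : AffineBasis ι ℝ E) (i j : ι) :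
    IntegrableOn (fun x => b.coord i x * b.coord j x) (convexHull ℝ (range b)) μ :=
  ((continuous_barycentric_coord b i).mul
    (continuous_barycentric_coord b j)).continuousOn.integrableOn_compact
    ((finite_range b).isCompact_convexHull ℝ)

theorem three_mul_setIntegral_coord_mul_self [Finite ι] (b : AffineBasis ι ℝ E) {i j : ι}
    (hij : i ≠ j) :
    3 * ∫ x in convexHull ℝ (range b), b.coord i x * b.coord i x ∂μ =
      (∫ x in convexHull ℝ (range b), b.coord j x * b.coord j x ∂μ) +
        4 * ∫ x in convexHull ℝ (range b), b.coord i x * b.coord j x ∂μ := by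
  have hint := integrableOn_coord_mul_coord μ b
  have hsplit := setIntegral_convexHull_bisection μ b hij (hint i i)
  have hleft (x : E) : (b.coord i x + b.coord j x / 2) * (b.coord i x + b.coord j x / 2) =
      b.coord i x * b.coord i x + b.coord i x * b.coord j x
        + 1 / 4 * (b.coord j x * b.coord j x) := by ring
  have hright (x : E) : b.coord i x / 2 * (b.coord i x / 2) =
      1 / 4 * (b.coord i x * b.coord i x) := by ring
  simp only [coord_bisectionMap_left b hij, coord_bisectionMap_right b hij.symm, hleft, hright,
    smul_eq_mul] at hsplit
  have hsum : ∫ x in convexHull ℝ (range b), (b.coord i x * b.coord i x + b.coord i x * b.coord j x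
      + 1 / 4 * (b.coord j x * b.coord j x)) ∂μ =
      (∫ x in convexHull ℝ (range b), b.coord i x * b.coord i x ∂μ)
        + (∫ x in convexHull ℝ (range b), b.coord i x * b.coord j x ∂μ)
        + 1 / 4 * ∫ x in convexHull ℝ (range b), b.coord j x * b.coord j x ∂μ := by
    rw [← integral_const_mul, ← integral_add (hint i i) (hint i j)]
    exact integral_add ((hint i i).add (hint i j)) ((hint j j).const_mul _)
  rw [hsum, integral_const_mul] at hsplit
  linarith

theorem setIntegral_coord_mul_self_eq_two_mul [Finite ι] (b : AffineBasis ι ℝ E) {i j : ι}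
    (hij : i ≠ j) :
    ∫ x in convexHull ℝ (range b), b.coord i x * b.coord i x ∂μ =
      2 * ∫ x in convexHull ℝ (range b), b.coord i x * b.coord j x ∂μ := by
  have h₁ := three_mul_setIntegral_coord_mul_self μ b hij
  have h₂ := three_mul_setIntegral_coord_mul_self μ b hij.symm
  simp only [mul_comm (b.coord j _) (b.coord i _)] at h₂
  linarith

theorem two_mul_setIntegral_coord_mul_coord [Finite ι] [DecidableEq ι] (b : AffineBasis ι ℝ E)
    (i j l : ι) :
    2 * ∫ x in convexHull ℝ (range b), b.coord i x * b.coord j x ∂μ =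
      (1 + if i = j then 1 else 0) *
        ∫ x in convexHull ℝ (range b), b.coord l x * b.coord l x ∂μ := by
  have hdiag : ∫ x in convexHull ℝ (range b), b.coord i x * b.coord i x ∂μ =
      ∫ x in convexHull ℝ (range b), b.coord l x * b.coord l x ∂μ := by
    rcases eq_or_ne i l with rfl | hil
    · rfl
    rw [setIntegral_coord_mul_self_eq_two_mul μ b hil,
      setIntegral_coord_mul_self_eq_two_mul μ b hil.symm]
    simp only [mul_comm]
  split_ifs with h
  · rw [← h, hdiag]
    ring
  · rw [← setIntegral_coord_mul_self_eq_two_mul μ b h, hdiag]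
    ring

variable [Fintype ι]

theorem setIntegral_coord_mul_coord [DecidableEq ι] (b : AffineBasis ι ℝ E) (i j : ι) :
    ∫ x in convexHull ℝ (range b), b.coord i x * b.coord j x ∂μ =
      μ.real (convexHull ℝ (range b)) / (Fintype.card ι * (Fintype.card ι + 1)) *
        (1 + if i = j then 1 else 0) := by
  set q := ∫ x in convexHull ℝ (range b), b.coord i x * b.coord i x ∂μ with hq
  have hpos : (0 : ℝ) < Fintype.card ι := Nat.cast_pos.2 (Fintype.card_pos_iff.2 ⟨i⟩)
  have hint := integrableOn_coord_mul_coord μ b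
  have hvol : 2 * μ.real (convexHull ℝ (range b)) =
      Fintype.card ι * (Fintype.card ι + 1) * q :=
    calc 2 * μ.real (convexHull ℝ (range b))
        = 2 * ∫ x in convexHull ℝ (range b), (∑ l, b.coord l x) * ∑ m, b.coord m x ∂μ := by
          simp [b.sum_coord_apply_eq_one]
      _ = ∑ l, ∑ m, 2 * ∫ x in convexHull ℝ (range b), b.coord l x * b.coord m x ∂μ := by
          simp only [Finset.sum_mul_sum]
          rw [integral_sum_sum hint]
          simp only [Finset.mul_sum]
      _ = ∑ l : ι, ∑ m : ι, (1 + if l = m then 1 else 0) * q := by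
          simp only [two_mul_setIntegral_coord_mul_coord μ b _ _ i, hq]
      _ = Fintype.card ι * (Fintype.card ι + 1) * q := by
          simp only [← Finset.sum_mul, Finset.sum_add_distrib, Finset.sum_const, Finset.card_univ,
            Finset.sum_ite_eq, Finset.mem_univ, if_true, nsmul_eq_mul]
          ring
  have hij := two_mul_setIntegral_coord_mul_coord μ b i j i
  rw [div_mul_eq_mul_div, eq_div_iff (by positivity)]
  linear_combination (Fintype.card ι * (Fintype.card ι + 1) / 2 : ℝ) * hij
    - (1 + if i = j then 1 else 0) / 2 * hvol

variable {F : Type*} [NormedAddCommGroup F] [InnerProductSpace ℝ F]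

theorem setIntegral_inner_affineMap (b : AffineBasis ι ℝ E) (f g : E →ᵃ[ℝ] F) :
    ∫ x in convexHull ℝ (range b), ⟪f x, g x⟫ ∂μ =
      μ.real (convexHull ℝ (range b)) / (Fintype.card ι * (Fintype.card ι + 1)) *
        (∑ i, ⟪f (b i), g (b i)⟫ + ⟪∑ i, f (b i), ∑ i, g (b i)⟫) := by
  classical
  have hint (i j : ι) := (integrableOn_coord_mul_coord μ b i j).mul_const ⟪f (b i), g (b j)⟫
  have hexpand (x : E) :
      ⟪f x, g x⟫ = ∑ i, ∑ j, b.coord i x * b.coord j x * ⟪f (b i), g (b j)⟫ := by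
    rw [affineMap_eq_sum_coord_smul b f x, affineMap_eq_sum_coord_smul b g x, sum_inner]
    simp only [inner_sum, real_inner_smul_left, real_inner_smul_right, mul_assoc,
      mul_left_comm]
  set C := μ.real (convexHull ℝ (range b)) / (Fintype.card ι * (Fintype.card ι + 1)) with hC
  calc ∫ x in convexHull ℝ (range b), ⟪f x, g x⟫ ∂μ
      = ∑ i, ∑ j, (∫ x in convexHull ℝ (range b), b.coord i x * b.coord j x ∂μ) *
          ⟪f (b i), g (b j)⟫ := by
        simp only [hexpand, integral_sum_sum hint, integral_mul_const]
    _ = ∑ i, ∑ j, C * ((1 + if i = j then 1 else 0) * ⟪f (b i), g (b j)⟫) := by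
        simp only [setIntegral_coord_mul_coord, ← hC, mul_assoc]
    _ = C * (∑ i, ⟪f (b i), g (b i)⟫ + ∑ i, ∑ j, ⟪f (b i), g (b j)⟫) := by
        simp only [← Finset.mul_sum, add_mul, one_mul, ite_mul, zero_mul, Finset.sum_add_distrib,
          Finset.sum_ite_eq, Finset.mem_univ, if_true, add_comm]
    _ = C * (∑ i, ⟪f (b i), g (b i)⟫ + ⟪∑ i, f (b i), ∑ i, g (b i)⟫) := by
        rw [sum_inner]
        simp only [inner_sum]

theorem setIntegral_norm_sq_affineMap (b : AffineBasis ι ℝ E) (f : E →ᵃ[ℝ] F) :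
    ∫ x in convexHull ℝ (range b), ‖f x‖ ^ 2 ∂μ =
      μ.real (convexHull ℝ (range b)) / (Fintype.card ι * (Fintype.card ι + 1)) *
        (∑ i, ‖f (b i)‖ ^ 2 + ‖∑ i, f (b i)‖ ^ 2) := by
  simpa only [real_inner_self_eq_norm_sq] using setIntegral_inner_affineMap μ b f f

theorem vertex_quadrature_norm_equiv_general (b : AffineBasis ι ℝ E) (f : E →ᵃ[ℝ] F) :
    ∫ x in convexHull ℝ (range b), ‖f x‖ ^ 2 ∂μ ≤
        μ.real (convexHull ℝ (range b)) / (finrank ℝ E + 1) * ∑ i, ‖f (b i)‖ ^ 2 ∧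
      μ.real (convexHull ℝ (range b)) / (finrank ℝ E + 1) * ∑ i, ‖f (b i)‖ ^ 2 ≤
        (finrank ℝ E + 2) * ∫ x in convexHull ℝ (range b), ‖f x‖ ^ 2 ∂μ := by
  have hcard : (Fintype.card ι : ℝ) = finrank ℝ E + 1 := by
    exact_mod_cast b.card_eq_finrank_add_one
  have hle := norm_sum_sq_le_card_mul_sum_norm_sq fun i => f (b i)
  rw [setIntegral_norm_sq_affineMap, hcard, add_assoc _ 1, one_add_one_eq_two]
  rw [hcard] at hle
  set m : ℝ := (finrank ℝ E : ℝ)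
  set V := μ.real (convexHull ℝ (range b))
  set A := ∑ i, ‖f (b i)‖ ^ 2
  set B := ‖∑ i, f (b i)‖ ^ 2
  have hm : 0 ≤ m := Nat.cast_nonneg _
  have hB : 0 ≤ B := sq_nonneg _
  constructor
  · calc V / ((m + 1) * (m + 2)) * (A + B)
        ≤ V / ((m + 1) * (m + 2)) * (A + (m + 1) * A) := by gcongr
      _ = V / (m + 1) * A := by field_simp; ring
  · calc V / (m + 1) * A
        = (m + 2) * (V / ((m + 1) * (m + 2)) * A) := by field_simp
      _ ≤ (m + 2) * (V / ((m + 1) * (m + 2)) * (A + B)) := by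
        gcongr
        exact le_add_of_nonneg_right hB

end Measure

/-- The vertex quadrature norm on an `n`-simplex `T = conv{v₀, …, vₙ}` is equivalent to the
`L²` norm on affine functions, with explicit constants: for every affine map `f : ℝⁿ → ℝ`,
`∫_T f² ≤ (|T| / (n+1)) Σᵢ f(vᵢ)² ≤ (n+2) ∫_T f²`. -/
theorem vertex_quadrature_norm_equiv (n : ℕ) (hn : 1 ≤ n)
    (v : Fin (n + 1) → (Fin n → ℝ)) (hv : AffineIndependent ℝ v)
    (f : (Fin n → ℝ) →ᵃ[ℝ] ℝ) :
    (∫ x in convexHull ℝ (Set.range v), (f x) ^ 2)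
        ≤ ((volume (convexHull ℝ (Set.range v))).toReal / ((n : ℝ) + 1))
            * ∑ i, (f (v i)) ^ 2 ∧
    ((volume (convexHull ℝ (Set.range v))).toReal / ((n : ℝ) + 1)) * ∑ i, (f (v i)) ^ 2
        ≤ ((n : ℝ) + 2) * ∫ x in convexHull ℝ (Set.range v), (f x) ^ 2 := by
  obtain ⟨b, rfl⟩ : ∃ b : AffineBasis (Fin (n + 1)) ℝ (Fin n → ℝ), ⇑b = v :=
    ⟨⟨v, hv, hv.affineSpan_eq_top_iff_card_eq_finrank_add_one.2 (by simp)⟩, rfl⟩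
  simpa [Measure.real] using vertex_quadrature_norm_equiv_general volume b f
end

section
/- Invariance of the pressure and of the curl of the vorticity under a change of mass bilinear form: suppose (r̂, q̂, p̂) solves the saddle-point system with bilinear form a and data (f_r, f_q), and (rₕ, qₕ, pₕ) solves the saddle-point system with bilinear form aₕ and the same data (f_r, f_q). Then C r̂ = C rₕ and p̂ = pₕ. -/
noncomputable section

open scoped RealInnerProductSpace

variable {R Q P : Type*}
  [NormedAddCommGroup R] [InnerProductSpace ℝ R] [FiniteDimensional ℝ R]
  [NormedAddCommGroup Q] [InnerProductSpace ℝ Q] [FiniteDimensional ℝ Q]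
  [NormedAddCommGroup P] [InnerProductSpace ℝ P] [FiniteDimensional ℝ P]

/-- `(r, q, p)` solves the saddle-point system with bilinear form `a` and data `(fr, fq)`:
(i) `a(r, r̃) − ⟨q, C r̃⟩ = fr(r̃)` for all `r̃`;
(ii) `⟨C r, q̃⟩ − ⟨p, D q̃⟩ = fq(q̃)` for all `q̃`;
(iii) `⟨D q, p̃⟩ = 0` for all `p̃`. -/
def Solves (C : R →ₗ[ℝ] Q) (D : Q →ₗ[ℝ] P) (a : R →ₗ[ℝ] R →ₗ[ℝ] ℝ)
    (fr : R →ₗ[ℝ] ℝ) (fq : Q →ₗ[ℝ] ℝ) (r : R) (q : Q) (p : P) : Prop :=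
  (∀ r' : R, a r r' - ⟪q, C r'⟫ = fr r') ∧
  (∀ q' : Q, ⟪C r, q'⟫ - ⟪p, D q'⟫ = fq q') ∧
  (∀ p' : P, ⟪D q, p'⟫ = 0)

/-! Testing the second equation with elements of `ker D` removes the pressure, and since `C r`
itself lies in `ker D`, these tests determine `C r`. With `C r` known, the equation gives
`⟪p, D q⟫` for every `q`, which determines `p` because the range of `D` is dense. -/

section

variable {𝕜 E F : Type*} [RCLike 𝕜]
  [NormedAddCommGroup E] [InnerProductSpace 𝕜 E]
  [NormedAddCommGroup F] [InnerProductSpace 𝕜 F]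

theorem eq_of_mem_of_forall_mem_inner_eq {K : Submodule 𝕜 E} {u₁ u₂ : E}
    (hu₁ : u₁ ∈ K) (hu₂ : u₂ ∈ K) (h : ∀ v ∈ K, inner 𝕜 u₁ v = inner 𝕜 u₂ v) : u₁ = u₂ :=
  have hK : (⟨u₁, hu₁⟩ : K) = ⟨u₂, hu₂⟩ := ext_inner_right 𝕜 fun v => h v v.2
  congrArg Subtype.val hK

theorem pressure_and_curl_invariant_general {D : E →ₗ[𝕜] F} (hD : DenseRange D) {f : E → 𝕜}
    {u₁ u₂ : E} {p₁ p₂ : F} (hu₁ : u₁ ∈ D.ker) (hu₂ : u₂ ∈ D.ker)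
    (h₁ : ∀ q, inner 𝕜 u₁ q - inner 𝕜 p₁ (D q) = f q)
    (h₂ : ∀ q, inner 𝕜 u₂ q - inner 𝕜 p₂ (D q) = f q) :
    u₁ = u₂ ∧ p₁ = p₂ := by
  have h (q : E) : inner 𝕜 u₁ q - inner 𝕜 p₁ (D q) = inner 𝕜 u₂ q - inner 𝕜 p₂ (D q) :=
    (h₁ q).trans (h₂ q).symm
  have hu : u₁ = u₂ := by
    refine eq_of_mem_of_forall_mem_inner_eq hu₁ hu₂ fun v hv => ?_
    simpa only [LinearMap.mem_ker.mp hv, inner_zero_right, sub_zero] using h v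
  have hp : p₁ = p₂ := by
    refine hD.eq_of_inner_left 𝕜 fun q => ?_
    simpa only [hu, sub_right_inj] using h q
  exact ⟨hu, hp⟩

end

/-- Invariance of the pressure and of the curl of the vorticity under a change of mass
bilinear form: if `(rhat, qhat, phat)` solves the saddle-point system with form `a` and
`(rₕ, qₕ, pₕ)` solves it with form `aₕ` and the same data `(fr, fq)`, then
`C rhat = C rₕ` and `phat = pₕ`. -/
theorem pressure_and_curl_invariant
    (C : R →ₗ[ℝ] Q) (D : Q →ₗ[ℝ] P)
    (hDC : ∀ r : R, D (C r) = 0) (hD : Function.Surjective D)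
    (a ah : R →ₗ[ℝ] R →ₗ[ℝ] ℝ) (fr : R →ₗ[ℝ] ℝ) (fq : Q →ₗ[ℝ] ℝ)
    (rhat : R) (qhat : Q) (phat : P) (rh : R) (qh : Q) (ph : P)
    (hhat : Solves C D a fr fq rhat qhat phat) (hh : Solves C D ah fr fq rh qh ph) :
    C rhat = C rh ∧ phat = ph :=
  pressure_and_curl_invariant_general hD.denseRange (hDC rhat) (hDC rh) hhat.2.1 hh.2.1
end
end

section
/- Invariance of the vorticity when the two bilinear forms agree on the kernel of C: in addition to the setting of the saddle-point system, assume a is symmetric and positive definite (a(s,s) > 0 for all s ≠ 0) and that aₕ(s, t) = a(s, t) for all s ∈ R and all t ∈ ker C. If (r̂, q̂, p̂) solves the system with form a and data (f_r, f_q), and (rₕ, qₕ, pₕ) solves the system with form aₕ and the same data, then r̂ = rₕ. -/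
noncomputable section

open scoped RealInnerProductSpace

variable {R Q P : Type*}
  [NormedAddCommGroup R] [InnerProductSpace ℝ R] [FiniteDimensional ℝ R]
  [NormedAddCommGroup Q] [InnerProductSpace ℝ Q] [FiniteDimensional ℝ Q]
  [NormedAddCommGroup P] [InnerProductSpace ℝ P] [FiniteDimensional ℝ P]

/-!
Testing the second equation on the range of `C` removes the `p`-term, because `D ∘ C = 0`, so it
determines `C r` independently of the bilinear form. Hence two solutions `r` and `rh` differ by an
element of `ker C`. Testing the first equation on `ker C` removes the `q`-term; there the two forms
agree, so `a (r - rh)` vanishes on `ker C`, and nondegeneracy of `a` on `ker C` forces `r = rh`.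
-/

section

omit [FiniteDimensional ℝ R] [FiniteDimensional ℝ Q] [FiniteDimensional ℝ P]

variable {C : R →ₗ[ℝ] Q} {D : Q →ₗ[ℝ] P} {a ah : R →ₗ[ℝ] R →ₗ[ℝ] ℝ} {fr frh : R →ₗ[ℝ] ℝ}
  {fq : Q →ₗ[ℝ] ℝ} {r rh : R} {q qh : Q} {p ph : P}

namespace Solves

theorem apply_eq_of_map_eq_zero (h : Solves C D a fr fq r q p) {t : R} (ht : C t = 0) :
    a r t = fr t := by
  simpa only [ht, inner_zero_right, sub_zero] using h.1 t

theorem inner_map_map (h : Solves C D a fr fq r q p) (hDC : ∀ s : R, D (C s) = 0) (s : R) :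
    ⟪C r, C s⟫ = fq (C s) := by
  simpa only [hDC, inner_zero_right, sub_zero] using h.2.1 (C s)

theorem map_eq_map (h : Solves C D a fr fq r q p) (hh : Solves C D ah frh fq rh qh ph)
    (hDC : ∀ s : R, D (C s) = 0) : C r = C rh := by
  have orthogonal_range (s : R) : ⟪C (r - rh), C s⟫ = 0 := by
    rw [map_sub, inner_sub_left, h.inner_map_map hDC, hh.inner_map_map hDC, sub_self]
  have map_sub_eq_zero : C (r - rh) = 0 := inner_self_eq_zero.mp (orthogonal_range (r - rh))
  rwa [map_sub, sub_eq_zero] at map_sub_eq_zero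

end Solves

theorem separatingLeft_domRestrict₁₂_of_anisotropic {k M : Type*} [CommSemiring k]
    [AddCommMonoid M] [Module k M] {B : LinearMap.BilinForm k M}
    (hB : B.toQuadraticMap.Anisotropic) (K : Submodule k M) :
    (B.domRestrict₁₂ K K).SeparatingLeft :=
  LinearMap.BilinForm.separatingLeft_of_anisotropic fun s hs => Subtype.ext (hB s hs)

theorem vorticity_invariant_general (hDC : ∀ s : R, D (C s) = 0)
    (ha : (a.domRestrict₁₂ C.ker C.ker).SeparatingLeft)
    (hker : ∀ s t : R, C t = 0 → ah s t = a s t)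
    (h : Solves C D a fr fq r q p) (hh : Solves C D ah fr fq rh qh ph) : r = rh := by
  have sub_mem_ker : r - rh ∈ C.ker := by
    rw [LinearMap.mem_ker, map_sub, h.map_eq_map hh hDC, sub_self]
  have apply_sub_eq_zero (t : R) (ht : C t = 0) : a (r - rh) t = 0 := by
    rw [map_sub, LinearMap.sub_apply, h.apply_eq_of_map_eq_zero ht, ← hker rh t ht,
      hh.apply_eq_of_map_eq_zero ht, sub_self]
  have sub_eq_zero_in_ker : (⟨r - rh, sub_mem_ker⟩ : C.ker) = 0 :=
    ha _ fun t => apply_sub_eq_zero t t.2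
  exact sub_eq_zero.mp (congrArg Subtype.val sub_eq_zero_in_ker)

end

/-- Invariance of the vorticity when the two bilinear forms agree on the kernel of `C`:
assume `a` is symmetric and positive definite and `aₕ(s, t) = a(s, t)` for all `s` and all
`t ∈ ker C`.  If `(rhat, qhat, phat)` solves the system with form `a` and
`(rh, qh, ph)` solves it with form `aₕ` and the same data, then `rhat = rh`. -/
theorem vorticity_invariant
    (C : R →ₗ[ℝ] Q) (D : Q →ₗ[ℝ] P)
    (hDC : ∀ r : R, D (C r) = 0) (hD : Function.Surjective D)
    (a ah : R →ₗ[ℝ] R →ₗ[ℝ] ℝ) (fr : R →ₗ[ℝ] ℝ) (fq : Q →ₗ[ℝ] ℝ)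
    (ha_symm : ∀ s t : R, a s t = a t s)
    (ha_pos : ∀ s : R, s ≠ 0 → 0 < a s s)
    (hker : ∀ s t : R, C t = 0 → ah s t = a s t)
    (rhat : R) (qhat : Q) (phat : P) (rh : R) (qh : Q) (ph : P)
    (hhat : Solves C D a fr fq rhat qhat phat) (hh : Solves C D ah fr fq rh qh ph) :
    rhat = rh := by
  have ha_posDef : (LinearMap.BilinMap.toQuadraticMap a).PosDef := ha_pos
  exact vorticity_invariant_general hDC
    (separatingLeft_domRestrict₁₂_of_anisotropic ha_posDef.anisotropic C.ker) hker hhat hh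
end
end

section
/- Unique solvability of the saddle-point system: in addition to the setting of the saddle-point system, assume the complex property ker D ⊆ ran C and that the bilinear form a is positive definite (a(s,s) > 0 for all s ≠ 0). Then for every choice of linear functionals f_r : R → ℝ and f_q : Q → ℝ there exists exactly one triple (r, q, p) ∈ R×Q×P solving the saddle-point system with form a and data (f_r, f_q). -/
noncomputable section

open scoped RealInnerProductSpace

variable {R Q P : Type*}
  [NormedAddCommGroup R] [InnerProductSpace ℝ R] [FiniteDimensional ℝ R]
  [NormedAddCommGroup Q] [InnerProductSpace ℝ Q] [FiniteDimensional ℝ Q]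
  [NormedAddCommGroup P] [InnerProductSpace ℝ P] [FiniteDimensional ℝ P]

/-!
The system is linear with as many equations as unknowns, so it is enough that the homogeneous
system has only the zero solution. There `q ∈ ker D`, so testing the second equation on `ker D`
gives `C r ⟂ ker D`, and testing the first equation against all `s` with `C s ⟂ ker D` eliminates
`q` and forces `r = 0`. What remains is `q ⟂ ran C` and `p ⟂ ran D`, whence `q = 0` and `p = 0`.
-/

open Module (Dual)

theorem separatingLeft_domRestrict₁₂_of_apply_self_ne_zero {S M N : Type*} [CommSemiring S]
    [AddCommMonoid M] [Module S M] [AddCommMonoid N] [Module S N] (K : Submodule S M)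
    {b : M →ₗ[S] M →ₗ[S] N} (hb : ∀ x, x ≠ 0 → b x x ≠ 0) :
    (b.domRestrict₁₂ K K).SeparatingLeft :=
  fun x hx => by_contra fun hne => hb x (mt Submodule.coe_eq_zero.1 hne) (hx x)

section Operator

omit [FiniteDimensional ℝ R] [FiniteDimensional ℝ Q] [FiniteDimensional ℝ P]

/-- The kernel of the coupling form `(r, q) ↦ ⟪C r, q⟫` on `R × ker D`, on which Brezzi's theory
asks the form `a` to be nondegenerate. If `D ∘ C = 0`, it is `ker C`. -/
def couplingKernel (C : R →ₗ[ℝ] Q) (D : Q →ₗ[ℝ] P) : Submodule ℝ R :=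
  (LinearMap.ker D)ᗮ.comap C

/-- The operator of the saddle-point system, sending `(r, q, p)` to the left-hand sides of the
three equations as functionals of the test vectors. -/
def saddlePointMap (C : R →ₗ[ℝ] Q) (D : Q →ₗ[ℝ] P) (a : R →ₗ[ℝ] R →ₗ[ℝ] ℝ) :
    R × Q × P →ₗ[ℝ] Dual ℝ R × Dual ℝ Q × Dual ℝ P :=
  (a.coprod (-(C.dualMap ∘ₗ innerₗ Q ∘ₗ .fst ℝ Q P))).prod
    (((innerₗ Q ∘ₗ C).coprod (-(D.dualMap ∘ₗ innerₗ P ∘ₗ .snd ℝ Q P))).prod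
      (innerₗ P ∘ₗ D ∘ₗ .fst ℝ Q P ∘ₗ .snd ℝ R (Q × P)))

variable {C : R →ₗ[ℝ] Q} {D : Q →ₗ[ℝ] P} {a : R →ₗ[ℝ] R →ₗ[ℝ] ℝ}

theorem saddlePointMap_eq_iff {r : R} {q : Q} {p : P}
    {f : Dual ℝ R} {g : Dual ℝ Q} {h : Dual ℝ P} :
    saddlePointMap C D a (r, q, p) = (f, g, h) ↔
      (∀ r', a r r' - ⟪q, C r'⟫ = f r') ∧ (∀ q', ⟪C r, q'⟫ - ⟪p, D q'⟫ = g q') ∧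
        ∀ p', ⟪D q, p'⟫ = h p' := by
  simp [saddlePointMap, LinearMap.ext_iff, sub_eq_add_neg]

theorem mem_couplingKernel_of_inner_eq {r : R} {p : P} (h : ∀ q', ⟪C r, q'⟫ = ⟪p, D q'⟫) :
    r ∈ couplingKernel C D := by
  refine (Submodule.mem_orthogonal' _ _).2 fun q' hq' => ?_
  rw [h, LinearMap.mem_ker.1 hq', inner_zero_right]

theorem eq_zero_of_apply_eq_inner {r : R} {q : Q}
    (ha : (a.domRestrict₁₂ (couplingKernel C D) (couplingKernel C D)).SeparatingLeft)
    (hr : r ∈ couplingKernel C D) (hq : D q = 0) (h : ∀ r', a r r' = ⟪q, C r'⟫) : r = 0 :=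
  congrArg Subtype.val <| ha ⟨r, hr⟩ fun s => (h s).trans (s.2 q hq)

theorem saddlePointMap_injective (hD : Function.Surjective D)
    (hCD : Disjoint (LinearMap.ker D) (LinearMap.range C)ᗮ)
    (ha : (a.domRestrict₁₂ (couplingKernel C D) (couplingKernel C D)).SeparatingLeft) :
    Function.Injective (saddlePointMap C D a) := by
  refine (injective_iff_map_eq_zero _).2 fun ⟨r, q, p⟩ h => ?_
  obtain ⟨h₁, h₂, h₃⟩ := saddlePointMap_eq_iff.1 h
  replace h₁ : ∀ r', a r r' = ⟪q, C r'⟫ := fun r' => sub_eq_zero.1 (h₁ r')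
  replace h₂ : ∀ q', ⟪C r, q'⟫ = ⟪p, D q'⟫ := fun q' => sub_eq_zero.1 (h₂ q')
  have hDq : D q = 0 := inner_self_eq_zero.1 (h₃ (D q))
  obtain rfl : r = 0 := eq_zero_of_apply_eq_inner ha (mem_couplingKernel_of_inner_eq h₂) hDq h₁
  have hq_orth : q ∈ (LinearMap.range C)ᗮ := by
    rintro _ ⟨s, rfl⟩
    rw [real_inner_comm, ← h₁, map_zero, LinearMap.zero_apply]
  have hq : q = 0 := Submodule.disjoint_def.1 hCD q hDq hq_orth
  have hp : p = 0 := by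
    obtain ⟨q', rfl⟩ := hD p
    rw [← inner_self_eq_zero (𝕜 := ℝ), ← h₂, map_zero, inner_zero_left]
  simp only [hq, hp, Prod.mk_zero_zero]

end Operator

theorem saddlePointMap_bijective {C : R →ₗ[ℝ] Q} {D : Q →ₗ[ℝ] P} {a : R →ₗ[ℝ] R →ₗ[ℝ] ℝ}
    (hD : Function.Surjective D) (hCD : Disjoint (LinearMap.ker D) (LinearMap.range C)ᗮ)
    (ha : (a.domRestrict₁₂ (couplingKernel C D) (couplingKernel C D)).SeparatingLeft) :
    Function.Bijective (saddlePointMap C D a) := by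
  have hinj := saddlePointMap_injective hD hCD ha
  refine ⟨hinj, (LinearMap.injective_iff_surjective_of_finrank_eq_finrank ?_).1 hinj⟩
  simp only [Module.finrank_prod, Subspace.dual_finrank_eq]

theorem saddle_point_unique_solvability_general
    (C : R →ₗ[ℝ] Q) (D : Q →ₗ[ℝ] P) (hD : Function.Surjective D)
    (hCD : Disjoint (LinearMap.ker D) (LinearMap.range C)ᗮ) (a : R →ₗ[ℝ] R →ₗ[ℝ] ℝ)
    (ha : (a.domRestrict₁₂ (couplingKernel C D) (couplingKernel C D)).SeparatingLeft)
    (fr : R →ₗ[ℝ] ℝ) (fq : Q →ₗ[ℝ] ℝ) :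
    ∃! x : R × Q × P, Solves C D a fr fq x.1 x.2.1 x.2.2 := by
  have hsolves (x : R × Q × P) :
      saddlePointMap C D a x = (fr, fq, 0) ↔ Solves C D a fr fq x.1 x.2.1 x.2.2 :=
    saddlePointMap_eq_iff
  exact (existsUnique_congr hsolves).1 <| (saddlePointMap_bijective hD hCD ha).existsUnique _

/-- Unique solvability of the saddle-point system: assume additionally the complex property
`ker D ⊆ ran C` and that `a` is positive definite.  Then for every choice of linear
functionals `fr : R → ℝ` and `fq : Q → ℝ` there exists exactly one triple
`(r, q, p)` solving the saddle-point system with form `a` and data `(fr, fq)`. -/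
theorem saddle_point_unique_solvability
    (C : R →ₗ[ℝ] Q) (D : Q →ₗ[ℝ] P)
    (hDC : ∀ r : R, D (C r) = 0) (hD : Function.Surjective D)
    (hexact : LinearMap.ker D ≤ LinearMap.range C)
    (a : R →ₗ[ℝ] R →ₗ[ℝ] ℝ) (ha_pos : ∀ s : R, s ≠ 0 → 0 < a s s) :
    ∀ (fr : R →ₗ[ℝ] ℝ) (fq : Q →ₗ[ℝ] ℝ),
      ∃! x : R × Q × P, Solves C D a fr fq x.1 x.2.1 x.2.2 :=
  saddle_point_unique_solvability_general C D hD
    ((LinearMap.range C).orthogonal_disjoint.mono_left hexact) a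
    (separatingLeft_domRestrict₁₂_of_apply_self_ne_zero _ fun s hs => (ha_pos s hs).ne')
end
end
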